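/- Let n ≥ 1 and let f_1, …, f_{n+1} : [-1,1] → ℝ be measurable functions that are bounded from below. Define f : S^n → ℝ by f(x) = ∑_{i=1}^{n+1} f_i(x_i). Then ∫_{S^n} e^{f} dσ_n ≤ ∏_{i=1}^{n+1} ( ∫_{[-1,1]} e^{2 f_i} dν_n )^{1/2}. -/

import Mathlib

open MeasureTheory Metric
open scoped ENNReal BigOperators

/-- The rotation-invariant (Haar) probability measure on the unit sphere
`S^n ⊂ ℝ^{n+1}`: the surface measure `volume.toSphere`, normalized to total mass `1`. -/
noncomputable def sphereHaar (n : ℕ) :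
    Measure (sphere (0 : EuclideanSpace ℝ (Fin (n + 1))) 1) :=
  ((volume : Measure (EuclideanSpace ℝ (Fin (n + 1)))).toSphere Set.univ)⁻¹ •
    (volume : Measure (EuclideanSpace ℝ (Fin (n + 1)))).toSphere

/-- The probability measure `ν_n` on `ℝ` with density
`t ↦ c_n · 1_{[-1,1]}(t) · (1 − t²)^{n/2 − 1}` with respect to Lebesgue measure,
where `c_n = Γ((n+1)/2)/(√π · Γ(n/2))` is the normalizing constant. -/
noncomputable def nuMeasure (n : ℕ) : Measure ℝ :=
  volume.withDensity fun t => ENNReal.ofReal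
    ((Real.Gamma (((n : ℝ) + 1) / 2) / (Real.sqrt Real.pi * Real.Gamma ((n : ℝ) / 2))) *
      Set.indicator (Set.Icc (-1 : ℝ) 1) (fun s => (1 - s ^ 2) ^ ((n : ℝ) / 2 - 1)) t)

open Polynomial in
/-- the ultraspherical operator -/
noncomputable def Lop (n : ℕ) : Polynomial ℝ →ₗ[ℝ] Polynomial ℝ :=
  (LinearMap.mulLeft ℝ (1 - X ^ 2 : ℝ[X])) ∘ₗ derivative ∘ₗ derivative
    - (LinearMap.mulLeft ℝ (C (n : ℝ) * X)) ∘ₗ derivative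

open Polynomial in
theorem Lop_apply (n : ℕ) (p : ℝ[X]) :
    Lop n p = (1 - X ^ 2) * derivative (derivative p) - C (n : ℝ) * X * derivative p := rfl

theorem Lop_eval (n : ℕ) (p : Polynomial ℝ) (x : ℝ) :
    (Lop n p).eval x = (1 - x ^ 2) * p.derivative.derivative.eval x
      - n * x * p.derivative.eval x := by
  simp [Lop_apply]

noncomputable def lam (n k : ℕ) : ℝ := k * (k + n - 1)

open Polynomial in
theorem Lop_coeff (n : ℕ) (p : ℝ[X]) (m : ℕ) :
    (Lop n p).coeff m = (m + 2) * (m + 1) * p.coeff (m + 2) - lam n m * p.coeff m := by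
  have h1 : Lop n p = derivative (derivative p) - (derivative (derivative p) * X) * X
      - C (n : ℝ) * (derivative p * X) := by
    rw [Lop_apply]; ring
  rw [h1]
  simp only [coeff_sub, coeff_C_mul, lam]
  rcases m with _ | _ | m
  · simp [coeff_derivative]; ring
  · simp [coeff_derivative]; ring
  · simp [coeff_derivative]; ring

theorem lam_pos {n : ℕ} (hn : 1 ≤ n) {k : ℕ} (hk : 1 ≤ k) : 0 < lam n k := by
  unfold lam
  have h1 : (1 : ℝ) ≤ n := by exact_mod_cast hn
  have h2 : (1 : ℝ) ≤ k := by exact_mod_cast hk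
  apply mul_pos <;> linarith

theorem lam_lt {n : ℕ} (hn : 1 ≤ n) {k l : ℕ} (hk : k < l) : lam n k < lam n l := by
  unfold lam
  have h1 : (1 : ℝ) ≤ n := by exact_mod_cast hn
  have h2 : (k : ℝ) < l := by exact_mod_cast hk
  have h3 : (0 : ℝ) ≤ k := by positivity
  nlinarith

open Polynomial in
theorem exists_decomp {n : ℕ} (hn : 1 ≤ n) (d : ℕ) : ∀ q : ℝ[X], q.natDegree ≤ d →
    ∃ P : ℕ → ℝ[X], (∀ k, Lop n (P k) = - (lam n k) • P k) ∧ (∃ c : ℝ, P 0 = C c) ∧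
      q = ∑ k ∈ Finset.range (d + 1), P k := by
  induction d with
  | zero =>
    intro q hq
    refine ⟨fun k => if k = 0 then C (q.coeff 0) else 0, ?_, ⟨q.coeff 0, by simp⟩, ?_⟩
    · intro k
      by_cases hk : k = 0
      · subst hk; simp [Lop_apply, lam]
      · simp [hk]
    · simpa using (eq_C_of_natDegree_le_zero hq)
  | succ d ih =>
    intro q hq
    have hdeg : (Lop n q + lam n (d + 1) • q).natDegree ≤ d := by
      rw [natDegree_le_iff_coeff_eq_zero]
      intro m hm
      have hz : ∀ j, d + 1 < j → q.coeff j = 0 := fun j hj =>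
        coeff_eq_zero_of_natDegree_lt (lt_of_le_of_lt hq hj)
      rw [coeff_add, Lop_coeff, coeff_smul, hz (m + 2) (by omega)]
      by_cases h : m = d + 1
      · subst h; simp
      · rw [hz m (by omega)]; simp
    obtain ⟨R, hR, ⟨c, hc⟩, hsum⟩ := ih _ hdeg
    have hne : ∀ k, k < d + 1 → lam n (d + 1) - lam n k ≠ 0 := fun k hk => by
      exact sub_ne_zero.mpr (lam_lt hn hk).ne'
    set S : ℕ → ℝ[X] := fun k => (lam n (d + 1) - lam n k)⁻¹ • R k with hS
    have hLS : ∀ k, Lop n (S k) = - (lam n k) • S k := fun k => by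
      simp only [hS, map_smul, hR k]; rw [smul_comm]
    refine ⟨fun k => if k < d + 1 then S k else if k = d + 1 then
      q - ∑ k ∈ Finset.range (d + 1), S k else 0, ?_,
      ⟨(lam n (d + 1) - lam n 0)⁻¹ * c, by simp [hS, hc, smul_C]⟩, ?_⟩
    · intro k
      by_cases hk : k < d + 1
      · simp only [hk, if_true]; exact hLS k
      · by_cases hk' : k = d + 1
        · subst hk'
          simp only [lt_irrefl, if_false, if_true, map_sub, map_sum, smul_sub, hLS]
          have h2 : ∑ k ∈ Finset.range (d + 1), (lam n (d + 1) - lam n k) • S k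
              = ∑ k ∈ Finset.range (d + 1), R k := by
            refine Finset.sum_congr rfl fun k hk => ?_
            rw [hS]; simp only
            rw [smul_smul, mul_inv_cancel₀ (hne k (Finset.mem_range.mp hk)), one_smul]
          rw [← hsum] at h2
          simp only [sub_smul, Finset.sum_sub_distrib, neg_smul, Finset.sum_neg_distrib,
            ← Finset.smul_sum] at h2 ⊢
          rw [eq_sub_of_add_eq h2.symm]
          abel
        · simp [hk, hk']
    · rw [Finset.sum_range_succ]
      simp only [lt_irrefl, if_false, if_true]
      rw [Finset.sum_congr rfl (g := S) (fun k hk => if_pos (Finset.mem_range.mp hk))]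
      abel

open Polynomial in
noncomputable def flow (n d : ℕ) (P : ℕ → ℝ[X]) (t : ℝ) : ℝ[X] :=
  ∑ k ∈ Finset.range (d + 1), Real.exp (-(lam n k) * t) • P k

theorem flow_zero (n d : ℕ) (P : ℕ → Polynomial ℝ) :
    flow n d P 0 = ∑ k ∈ Finset.range (d + 1), P k := by simp [flow]

theorem flow_eval (n d : ℕ) (P : ℕ → Polynomial ℝ) (t x : ℝ) :
    (flow n d P t).eval x
      = ∑ k ∈ Finset.range (d + 1), Real.exp (-(lam n k) * t) * (P k).eval x := by
  simp [flow, Polynomial.eval_finsetSum]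

theorem flow_deriv_eval (n d : ℕ) (P : ℕ → Polynomial ℝ) (t x : ℝ) :
    (flow n d P t).derivative.eval x
      = ∑ k ∈ Finset.range (d + 1), Real.exp (-(lam n k) * t) * (P k).derivative.eval x := by
  simp [flow, Polynomial.eval_finsetSum]

theorem flow_deriv2_eval (n d : ℕ) (P : ℕ → Polynomial ℝ) (t x : ℝ) :
    (flow n d P t).derivative.derivative.eval x
      = ∑ k ∈ Finset.range (d + 1),
        Real.exp (-(lam n k) * t) * (P k).derivative.derivative.eval x := by
  simp [flow, Polynomial.eval_finsetSum]

theorem flow_hasDerivAt {n d : ℕ} {P : ℕ → Polynomial ℝ}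
    (hP : ∀ k, Lop n (P k) = - (lam n k) • P k) (t x : ℝ) :
    HasDerivAt (fun t => (flow n d P t).eval x) ((Lop n (flow n d P t)).eval x) t := by
  have h1 : (Lop n (flow n d P t)).eval x = ∑ k ∈ Finset.range (d + 1),
      (Real.exp (-(lam n k) * t) * (-(lam n k) * 1)) * (P k).eval x := by
    simp only [flow, map_sum, map_smul, hP, Polynomial.eval_finsetSum, Polynomial.eval_smul,
      smul_eq_mul]
    refine Finset.sum_congr rfl fun k _ => by ring
  rw [h1]
  simp only [flow_eval]
  refine HasDerivAt.fun_sum fun k _ => ?_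
  exact (((hasDerivAt_id t).const_mul _).exp).mul_const _

theorem flow_cont (n d : ℕ) (P : ℕ → Polynomial ℝ) :
    Continuous (fun z : ℝ × ℝ => (flow n d P z.1).eval z.2) := by
  simp only [flow_eval]
  fun_prop

theorem deriv_le_of_min_left {f : ℝ → ℝ} {f' a b : ℝ} (hab : a < b) (hf : HasDerivAt f f' b)
    (hmin : ∀ t ∈ Set.Icc a b, f b ≤ f t) : f' ≤ 0 := by
  have h1 : IsLocalMinOn f (Set.Icc a b) b :=
    Filter.eventually_of_mem self_mem_nhdsWithin hmin
  have h2 := h1.hasFDerivWithinAt_nonneg (hf.hasFDerivAt.hasFDerivWithinAt) (y := a - b)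
    (mem_posTangentConeAt_of_segment_subset (by rw [add_sub_cancel, segment_symm, segment_eq_Icc hab.le]))
  simp at h2
  nlinarith

theorem deriv_ge_of_min_right {f : ℝ → ℝ} {f' a b : ℝ} (hab : a < b) (hf : HasDerivAt f f' a)
    (hmin : ∀ t ∈ Set.Icc a b, f a ≤ f t) : 0 ≤ f' := by
  have h1 : IsLocalMinOn f (Set.Icc a b) a :=
    Filter.eventually_of_mem self_mem_nhdsWithin hmin
  have h2 := h1.hasFDerivWithinAt_nonneg (hf.hasFDerivAt.hasFDerivWithinAt) (y := b - a)
    (mem_posTangentConeAt_of_segment_subset (by rw [add_sub_cancel, segment_eq_Icc hab.le]))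
  simp at h2
  nlinarith

theorem deriv2_nonneg_of_min {p : Polynomial ℝ} {x : ℝ}
    (hmin : IsLocalMin (fun y => p.eval y) x) : 0 ≤ p.derivative.derivative.eval x := by
  by_contra hneg
  push Not at hneg
  have hd : deriv (fun y => p.eval y) = fun y => p.derivative.eval y := by
    ext y; exact p.deriv
  have hdd : deriv (deriv (fun y => p.eval y)) = fun y => p.derivative.derivative.eval y := by
    rw [hd]; ext y; exact p.derivative.deriv
  have hmax : IsLocalMax (fun y => p.eval y) x :=
    isLocalMax_of_deriv_deriv_neg (by rw [hdd]; exact hneg) hmin.deriv_eq_zero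
      p.continuous.continuousAt
  have hc : (fun y => p.eval y) =ᶠ[nhds x] fun _ => p.eval x := by
    filter_upwards [hmin, hmax] with y h1 h2 using le_antisymm h2 h1
  have := hc.deriv.deriv_eq
  rw [hdd] at this
  simp at this
  linarith

theorem Lop_nonneg_of_min {n : ℕ} {p : Polynomial ℝ} {x : ℝ} (hx : x ∈ Set.Icc (-1 : ℝ) 1)
    (hmin : ∀ y ∈ Set.Icc (-1 : ℝ) 1, p.eval x ≤ p.eval y) : 0 ≤ (Lop n p).eval x := by
  rw [Lop_eval]
  have hn : (0 : ℝ) ≤ n := by positivity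
  rcases eq_or_lt_of_le hx.1 with h | h
  · subst h
    have := deriv_ge_of_min_right (by norm_num : (-1 : ℝ) < 1) (p.hasDerivAt (-1)) hmin
    nlinarith
  rcases eq_or_lt_of_le hx.2 with h' | h'
  · subst h'
    have := deriv_le_of_min_left (by norm_num : (-1 : ℝ) < 1) (p.hasDerivAt 1) hmin
    nlinarith
  have hl : IsLocalMin (fun y => p.eval y) x :=
    Filter.eventually_of_mem (Icc_mem_nhds h h') hmin
  have h2 := deriv2_nonneg_of_min hl
  have h1 : p.derivative.eval x = 0 := by rw [← p.deriv]; exact hl.deriv_eq_zero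
  rw [h1]
  have : 0 ≤ 1 - x ^ 2 := by nlinarith
  simpa using mul_nonneg this h2

theorem flow_pos {n d : ℕ} {P : ℕ → Polynomial ℝ}
    (hP : ∀ k, Lop n (P k) = - (lam n k) • P k)
    (h0 : ∀ x ∈ Set.Icc (-1 : ℝ) 1, 0 < (flow n d P 0).eval x) :
    ∀ t, 0 ≤ t → ∀ x ∈ Set.Icc (-1 : ℝ) 1, 0 < (flow n d P t).eval x := by
  intro t1 ht1 x1 hx1
  by_contra hneg
  push Not at hneg
  obtain ⟨y, hy, hymin⟩ := isCompact_Icc.exists_isMinOn (⟨0, by norm_num⟩ : (Set.Icc (-1 : ℝ) 1).Nonempty)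
    ((flow n d P 0).continuous.continuousOn)
  set e := (flow n d P 0).eval y with he
  have hepos : 0 < e := h0 y hy
  set δ := e / (t1 + 1) with hδ
  have hδpos : 0 < δ := by positivity
  have hδe : δ * t1 < e := by
    rw [hδ, div_mul_eq_mul_div, div_lt_iff₀ (by positivity)]; nlinarith
  obtain ⟨⟨t0, x0⟩, hz, hmin⟩ := (isCompact_Icc.prod isCompact_Icc).exists_isMinOn
    (⟨(t1, x1), ⟨⟨ht1, le_rfl⟩, hx1⟩⟩ : (Set.Icc (0 : ℝ) t1 ×ˢ Set.Icc (-1 : ℝ) 1).Nonempty)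
    (f := fun z : ℝ × ℝ => (flow n d P z.1).eval z.2 + δ * z.1)
    (((flow_cont n d P).add (by fun_prop)).continuousOn)
  obtain ⟨ht0, hx0⟩ := hz
  simp only at ht0 hx0
  have hmin' : ∀ t ∈ Set.Icc (0 : ℝ) t1, ∀ x ∈ Set.Icc (-1 : ℝ) 1,
      (flow n d P t0).eval x0 + δ * t0 ≤ (flow n d P t).eval x + δ * t :=
    fun t ht x hx => hmin (show (t, x) ∈ _ from ⟨ht, hx⟩)
  have ht0pos : 0 < t0 := by
    rcases eq_or_lt_of_le ht0.1 with h | h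
    · exfalso
      have h1 := hmin' t1 ⟨ht1, le_rfl⟩ x1 hx1
      rw [← h] at h1
      have h2 : e ≤ _ := hymin hx0
      simp only at h2
      linarith
    · exact h
  have hL : 0 ≤ (Lop n (flow n d P t0)).eval x0 := Lop_nonneg_of_min hx0 fun y hy => by
    have := hmin' t0 ht0 y hy; linarith
  have hD := deriv_le_of_min_left ht0pos
    ((flow_hasDerivAt (d := d) hP t0 x0).add ((hasDerivAt_id t0).const_mul δ))
    (fun t ht => hmin' t ⟨ht.1, ht.2.trans ht0.2⟩ x0 hx0)
  linarith

theorem pointwise_ineq {ι : Type*} [Fintype ι] (x a : ι → ℝ) (hx : ∑ i, x i ^ 2 = 1) :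
    ∑ i, a i ^ 2 - (∑ i, a i * x i) ^ 2 ≤ 2 * ∑ i, (1 - x i ^ 2) * a i ^ 2 := by
  classical
  generalize hs : ∑ i, a i * x i = s
  set v : ι → ℝ := fun i => a i - s * x i with hv
  set V := ∑ i, v i ^ 2 with hV
  have hVnn : 0 ≤ V := Finset.sum_nonneg fun i _ => sq_nonneg _
  have hvx : ∑ i, v i * x i = 0 := by
    have : ∑ i, v i * x i = ∑ i, a i * x i - s * ∑ i, x i ^ 2 := by
      rw [Finset.mul_sum, ← Finset.sum_sub_distrib]
      exact Finset.sum_congr rfl fun i _ => by simp only [hv]; ring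
    rw [this, hx, hs]; ring
  have hVeq : V = ∑ i, a i ^ 2 - s ^ 2 := by
    have : V = ∑ i, a i ^ 2 - 2 * s * ∑ i, a i * x i + s ^ 2 * ∑ i, x i ^ 2 := by
      rw [hV, Finset.mul_sum, Finset.mul_sum, ← Finset.sum_sub_distrib, ← Finset.sum_add_distrib]
      exact Finset.sum_congr rfl fun i _ => by simp only [hv]; ring
    rw [this, hx, hs]; ring
  have hav : ∑ i, a i * v i = V := by
    have : ∑ i, a i * v i = ∑ i, a i ^ 2 - s * ∑ i, a i * x i := by
      rw [Finset.mul_sum, ← Finset.sum_sub_distrib]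
      exact Finset.sum_congr rfl fun i _ => by simp only [hv]; ring
    rw [this, hs, hVeq]; ring
  have hsplit : ∀ (g : ι → ℝ) (i : ι), ∑ j ∈ Finset.univ.erase i, g j = ∑ j, g j - g i :=
    fun g i => by rw [← Finset.add_sum_erase _ g (Finset.mem_univ i)]; ring
  have hcs : ∀ i, v i ^ 2 ≤ V * (1 - x i ^ 2) := fun i => by
    have h := Finset.sum_mul_sq_le_sq_mul_sq (Finset.univ.erase i) v x
    rw [hsplit, hsplit, hsplit, hvx, hx, ← hV] at h
    nlinarith
  have hd : ∀ i, 0 ≤ 1 - x i ^ 2 := fun i => by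
    have := Finset.single_le_sum (f := fun i => x i ^ 2) (fun i _ => sq_nonneg _) (Finset.mem_univ i)
    linarith
  have hkey : ∀ i, a i * v i ≤ (1 - x i ^ 2) * a i ^ 2 + (v i ^ 2 + x i ^ 2 * V) / 4 := fun i => by
    rcases eq_or_lt_of_le (hd i) with h | h
    · have h1 := hcs i
      rw [← h] at h1 ⊢
      have : v i = 0 := by nlinarith
      rw [this]
      have := mul_nonneg (sq_nonneg (x i)) hVnn
      nlinarith
    · have h1 := hcs i
      have h2 : x i ^ 2 * v i ^ 2 ≤ x i ^ 2 * (V * (1 - x i ^ 2)) :=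
        mul_le_mul_of_nonneg_left h1 (sq_nonneg _)
      refine le_of_mul_le_mul_left ?_ h
      nlinarith [sq_nonneg ((1 - x i ^ 2) * a i - v i / 2)]
  have hsum := Finset.sum_le_sum fun i (_ : i ∈ Finset.univ) => hkey i
  rw [hav, Finset.sum_add_distrib, ← Finset.sum_div, Finset.sum_add_distrib, ← Finset.sum_mul, hx,
    ← hV] at hsum
  rw [← hVeq]
  linarith

/-- the sphere -/
abbrev Sph (n : ℕ) := sphere (0 : EuclideanSpace ℝ (Fin (n + 1))) 1

instance sphereHaar_prob (n : ℕ) : IsProbabilityMeasure (sphereHaar n) := by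
  constructor
  unfold sphereHaar
  rw [Measure.smul_apply, smul_eq_mul]
  refine ENNReal.inv_mul_cancel ?_ (measure_ne_top _ _)
  rw [Measure.measure_univ_ne_zero]
  exact Measure.toSphere_ne_zero _

/-- action of isometries on the sphere -/
noncomputable def sphMap {n : ℕ} (e : EuclideanSpace ℝ (Fin (n + 1)) ≃ₗᵢ[ℝ] EuclideanSpace ℝ (Fin (n + 1)))
    (x : Sph n) : Sph n := ⟨e x, by simp⟩

theorem sphMap_cont {n : ℕ}
    (e : EuclideanSpace ℝ (Fin (n + 1)) ≃ₗᵢ[ℝ] EuclideanSpace ℝ (Fin (n + 1))) :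
    Continuous (sphMap e) := by
  unfold sphMap
  exact Continuous.subtype_mk (e.continuous.comp continuous_subtype_val) _

open Pointwise in
theorem sphMap_mp {n : ℕ}
    (e : EuclideanSpace ℝ (Fin (n + 1)) ≃ₗᵢ[ℝ] EuclideanSpace ℝ (Fin (n + 1))) :
    MeasurePreserving (sphMap e) (sphereHaar n) (sphereHaar n) := by
  have h : MeasurePreserving (sphMap e)
      (volume : Measure (EuclideanSpace ℝ (Fin (n + 1)))).toSphere
      (volume : Measure (EuclideanSpace ℝ (Fin (n + 1)))).toSphere := by
    refine ⟨(sphMap_cont e).measurable, ?_⟩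
    ext s hs
    rw [Measure.map_apply (sphMap_cont e).measurable hs,
      Measure.toSphere_apply' _ ((sphMap_cont e).measurable hs), Measure.toSphere_apply' _ hs]
    congr 1
    have h1 : Set.Ioo (0 : ℝ) 1 • ((↑) '' (sphMap e ⁻¹' s) : Set (EuclideanSpace ℝ (Fin (n + 1))))
        = e ⁻¹' (Set.Ioo (0 : ℝ) 1 • ((↑) '' s)) := by
      ext y
      simp only [Set.mem_smul, Set.mem_image, Set.mem_preimage]
      constructor
      · rintro ⟨r, hr, _, ⟨z, hz, rfl⟩, rfl⟩
        exact ⟨r, hr, _, ⟨sphMap e z, hz, rfl⟩, by simp [sphMap]⟩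
      · rintro ⟨r, hr, _, ⟨z, hz, rfl⟩, hy⟩
        refine ⟨r, hr, _, ⟨sphMap e.symm z, ?_, rfl⟩, ?_⟩
        · have : sphMap e (sphMap e.symm z) = z := by
            apply Subtype.ext; simp [sphMap]
          rw [this]; exact hz
        · apply e.injective
          rw [← hy]; simp [sphMap]
    rw [h1]
    exact e.measurePreserving.measure_preimage_equiv (f := e.toMeasurableEquiv) _
  unfold sphereHaar
  exact h.smul_measure _

/-- planar rotation -/
noncomputable def rot {n : ℕ} (i j : Fin (n + 1)) (hij : i ≠ j) (θ : ℝ) :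
    EuclideanSpace ℝ (Fin (n + 1)) ≃ₗᵢ[ℝ] EuclideanSpace ℝ (Fin (n + 1)) :=
  LinearIsometry.toLinearIsometryEquiv (R₁ := ℝ)
    { toFun := fun x => WithLp.toLp 2 fun k => if k = i then Real.cos θ * x i - Real.sin θ * x j
        else if k = j then Real.sin θ * x i + Real.cos θ * x j else x k
      map_add' := by
        intro x y; ext k
        simp only [PiLp.add_apply]
        split_ifs <;> ring
      map_smul' := by
        intro c x; ext k
        simp only [PiLp.smul_apply, smul_eq_mul, RingHom.id_apply]
        split_ifs <;> ring
      norm_map' := by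
        intro x
        rw [EuclideanSpace.norm_eq, EuclideanSpace.norm_eq]
        congr 1
        rw [← sub_eq_zero, ← Finset.sum_sub_distrib, Fintype.sum_eq_add i j hij]
        · simp [hij.symm]
          have := Real.sin_sq_add_cos_sq θ
          linear_combination (x i ^ 2 + x j ^ 2) * this
        · rintro k ⟨h1, h2⟩
          simp [h1, h2] } rfl

theorem rot_apply {n : ℕ} (i j : Fin (n + 1)) (hij : i ≠ j) (θ : ℝ)
    (x : EuclideanSpace ℝ (Fin (n + 1))) (k : Fin (n + 1)) :
    rot i j hij θ x k = if k = i then Real.cos θ * x i - Real.sin θ * x j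
        else if k = j then Real.sin θ * x i + Real.cos θ * x j else x k := rfl

theorem rot_add {n : ℕ} (i j : Fin (n + 1)) (hij : i ≠ j) (θ φ : ℝ)
    (x : EuclideanSpace ℝ (Fin (n + 1))) :
    rot i j hij θ (rot i j hij φ x) = rot i j hij (θ + φ) x := by
  ext k
  simp only [rot_apply]
  simp only [if_true, hij.symm, if_false, Real.cos_add, Real.sin_add]
  split_ifs <;> ring

theorem ibp {n : ℕ} (i j : Fin (n + 1)) (hij : i ≠ j) (h h' : Sph n → ℝ) (hc : Continuous h)
    (hc' : Continuous h')
    (hd : ∀ x : Sph n, HasDerivAt (fun θ => h (sphMap (rot i j hij θ) x)) (h' x) 0) :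
    ∫ x, h' x ∂(sphereHaar n) = 0 := by
  obtain ⟨M, hM⟩ := (isCompact_range hc'.norm).bddAbove
  have hM' : ∀ x, ‖h' x‖ ≤ M := fun x => hM ⟨x, rfl⟩
  have hd2 : ∀ (x : Sph n) (θ : ℝ), HasDerivAt (fun θ => h (sphMap (rot i j hij θ) x))
      (h' (sphMap (rot i j hij θ) x)) θ := by
    intro x θ
    have h1 := hd (sphMap (rot i j hij θ) x)
    have h2 : HasDerivAt (fun s : ℝ => s - θ) 1 θ := (hasDerivAt_id θ).sub_const θ
    rw [← sub_self θ] at h1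
    have h3 := HasDerivAt.comp (h := fun s : ℝ => s - θ) θ h1 h2
    rw [mul_one] at h3
    refine h3.congr_of_eventuallyEq (Filter.Eventually.of_forall fun s => ?_)
    simp only [Function.comp]
    congr 1
    apply Subtype.ext
    simp [sphMap, rot_add]
  have key := (hasDerivAt_integral_of_dominated_loc_of_deriv_le (μ := sphereHaar n)
    (F := fun θ x => h (sphMap (rot i j hij θ) x))
    (F' := fun θ x => h' (sphMap (rot i j hij θ) x)) (x₀ := (0 : ℝ)) (s := Set.univ)
    (bound := fun _ => M) Filter.univ_mem
    (Filter.Eventually.of_forall fun θ => (hc.comp (sphMap_cont _)).aestronglyMeasurable)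
    ((hc.comp (sphMap_cont _)).integrable_of_hasCompactSupport
      (HasCompactSupport.of_compactSpace _))
    ((hc'.comp (sphMap_cont _)).aestronglyMeasurable)
    (Filter.Eventually.of_forall fun x θ _ => hM' _)
    (integrable_const _)
    (Filter.Eventually.of_forall fun x θ _ => hd2 x θ)).2
  have hinv : ∀ θ, ∫ x, h (sphMap (rot i j hij θ) x) ∂(sphereHaar n) = ∫ x, h x ∂(sphereHaar n) := by
    intro θ
    conv_rhs => rw [← (sphMap_mp (rot i j hij θ)).map_eq]
    rw [integral_map (sphMap_cont _).aemeasurable hc.aestronglyMeasurable]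
  simp only [hinv] at key
  have h0 := key.unique (hasDerivAt_const 0 _)
  rw [← h0]
  refine integral_congr_ae (Filter.Eventually.of_forall fun x => ?_)
  simp only
  congr 1
  apply Subtype.ext
  ext k
  simp only [sphMap, rot_apply]
  split_ifs with h1 h2
  · subst h1; simp
  · subst h2; simp
  · rfl

theorem sph_sum {n : ℕ} (x : Sph n) : ∑ i, (x : EuclideanSpace ℝ (Fin (n + 1))) i ^ 2 = 1 := by
  have h := x.2
  rw [mem_sphere_zero_iff_norm, EuclideanSpace.norm_eq, Real.sqrt_eq_one] at h
  simpa using h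

theorem sph_mem {n : ℕ} (x : Sph n) (i : Fin (n + 1)) :
    (x : EuclideanSpace ℝ (Fin (n + 1))) i ∈ Set.Icc (-1 : ℝ) 1 := by
  have := Finset.single_le_sum (f := fun i => (x : EuclideanSpace ℝ (Fin (n + 1))) i ^ 2)
    (fun i _ => sq_nonneg _) (Finset.mem_univ i)
  rw [sph_sum] at this
  exact ⟨by nlinarith, by nlinarith⟩

theorem rot_i {n : ℕ} (i j : Fin (n + 1)) (hij : i ≠ j) (x : Sph n) :
    HasDerivAt (fun θ => (sphMap (rot i j hij θ) x : EuclideanSpace ℝ (Fin (n + 1))) i)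
      (-(x : EuclideanSpace ℝ (Fin (n + 1))) j) 0 := by
  simp only [sphMap, rot_apply, if_true]
  have := ((Real.hasDerivAt_cos 0).mul_const ((x : EuclideanSpace ℝ (Fin (n + 1))) i)).fun_sub
    ((Real.hasDerivAt_sin 0).mul_const ((x : EuclideanSpace ℝ (Fin (n + 1))) j))
  simpa using this

theorem rot_j {n : ℕ} (i j : Fin (n + 1)) (hij : i ≠ j) (x : Sph n) :
    HasDerivAt (fun θ => (sphMap (rot i j hij θ) x : EuclideanSpace ℝ (Fin (n + 1))) j)
      ((x : EuclideanSpace ℝ (Fin (n + 1))) i) 0 := by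
  simp only [sphMap, rot_apply, if_true, hij.symm, if_false]
  have := ((Real.hasDerivAt_sin 0).mul_const ((x : EuclideanSpace ℝ (Fin (n + 1))) i)).fun_add
    ((Real.hasDerivAt_cos 0).mul_const ((x : EuclideanSpace ℝ (Fin (n + 1))) j))
  simpa using this

theorem rot_k {n : ℕ} (i j : Fin (n + 1)) (hij : i ≠ j) (x : Sph n) (k : Fin (n + 1))
    (hi : k ≠ i) (hj : k ≠ j) (θ : ℝ) :
    (sphMap (rot i j hij θ) x : EuclideanSpace ℝ (Fin (n + 1))) k
      = (x : EuclideanSpace ℝ (Fin (n + 1))) k := by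
  simp [sphMap, rot_apply, hi, hj]

theorem sph_zero {n : ℕ} (i j : Fin (n + 1)) (hij : i ≠ j) (x : Sph n) :
    sphMap (rot i j hij 0) x = x := by
  apply Subtype.ext
  ext k
  simp only [sphMap, rot_apply]
  split_ifs with h1 h2
  · subst h1; simp
  · subst h2; simp
  · rfl

theorem coord_cont {n : ℕ} (i : Fin (n + 1)) :
    Continuous fun x : Sph n => (x : EuclideanSpace ℝ (Fin (n + 1))) i := by fun_prop

theorem sph_integrable {n : ℕ} {h : Sph n → ℝ} (hc : Continuous h) :
    Integrable h (sphereHaar n) :=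
  hc.integrable_of_hasCompactSupport (HasCompactSupport.of_compactSpace _)

theorem sph_Lop {n : ℕ} (i : Fin (n + 1)) (p : Polynomial ℝ) :
    ∫ x : Sph n, (Lop n p).eval ((x : EuclideanSpace ℝ (Fin (n + 1))) i) ∂(sphereHaar n) = 0 := by
  have hco := coord_cont (n := n)
  have hpc : ∀ q : Polynomial ℝ,
      Continuous fun x : Sph n => q.eval ((x : EuclideanSpace ℝ (Fin (n + 1))) i) :=
    fun q => q.continuous.comp (hco i)
  have hcont : ∀ j : Fin (n + 1), Continuous fun x : Sph n =>
      (x : EuclideanSpace ℝ (Fin (n + 1))) j ^ 2 *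
        p.derivative.derivative.eval ((x : EuclideanSpace ℝ (Fin (n + 1))) i)
      - (x : EuclideanSpace ℝ (Fin (n + 1))) i *
        p.derivative.eval ((x : EuclideanSpace ℝ (Fin (n + 1))) i) := fun j =>
    (((hco j).pow 2).mul (hpc _)).sub ((hco i).mul (hpc _))
  have h1 : ∀ j ∈ Finset.univ.erase i, ∫ x : Sph n,
      ((x : EuclideanSpace ℝ (Fin (n + 1))) j ^ 2 *
        p.derivative.derivative.eval ((x : EuclideanSpace ℝ (Fin (n + 1))) i)
      - (x : EuclideanSpace ℝ (Fin (n + 1))) i *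
        p.derivative.eval ((x : EuclideanSpace ℝ (Fin (n + 1))) i)) ∂(sphereHaar n) = 0 := by
    intro j hj
    have hij : i ≠ j := (Finset.ne_of_mem_erase hj).symm
    refine ibp i j hij (fun x => -(x : EuclideanSpace ℝ (Fin (n + 1))) j *
      p.derivative.eval ((x : EuclideanSpace ℝ (Fin (n + 1))) i)) _
      ((hco j).neg.mul (hpc _)) (hcont j) fun x => ?_
    have ha := (p.derivative.hasDerivAt _).comp (0 : ℝ) (rot_i i j hij x)
    have hb := (rot_j i j hij x).neg.mul ha
    simp only [Function.comp_apply, sph_zero, Pi.neg_apply] at hb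
    exact HasDerivAt.congr_deriv hb (by ring)
  have h2 := Finset.sum_eq_zero h1
  rw [← integral_finsetSum _ fun j _ => sph_integrable (hcont j)] at h2
  rw [← h2]
  refine integral_congr_ae (Filter.Eventually.of_forall fun x => ?_)
  simp only
  rw [Finset.sum_sub_distrib, ← Finset.sum_mul, Lop_eval]
  have h3 := sph_sum x
  rw [← Finset.add_sum_erase _ _ (Finset.mem_univ i)] at h3
  rw [eq_sub_of_add_eq' h3]
  simp
  ring

/-- density of nu -/
noncomputable def nuDens (n : ℕ) (t : ℝ) : ℝ :=
  (Real.Gamma (((n : ℝ) + 1) / 2) / (Real.sqrt Real.pi * Real.Gamma ((n : ℝ) / 2))) *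
      Set.indicator (Set.Icc (-1 : ℝ) 1) (fun s => (1 - s ^ 2) ^ ((n : ℝ) / 2 - 1)) t

theorem nuMeasure_eq (n : ℕ) :
    nuMeasure n = volume.withDensity fun t => ENNReal.ofReal (nuDens n t) := rfl

theorem nuConst_pos {n : ℕ} (hn : 1 ≤ n) :
    0 < Real.Gamma (((n : ℝ) + 1) / 2) / (Real.sqrt Real.pi * Real.Gamma ((n : ℝ) / 2)) := by
  have h1 : (1 : ℝ) ≤ n := by exact_mod_cast hn
  have := Real.Gamma_pos_of_pos (show 0 < ((n : ℝ) + 1) / 2 by positivity)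
  have := Real.Gamma_pos_of_pos (show 0 < (n : ℝ) / 2 by positivity)
  have := Real.pi_pos
  positivity

theorem nuDens_meas (n : ℕ) : Measurable (nuDens n) := by
  unfold nuDens
  refine Measurable.const_mul (Measurable.indicator (by fun_prop) measurableSet_Icc) _

theorem nuDens_nonneg {n : ℕ} (hn : 1 ≤ n) (t : ℝ) : 0 ≤ nuDens n t := by
  unfold nuDens
  refine mul_nonneg (nuConst_pos hn).le (Set.indicator_nonneg (fun s hs => ?_) _)
  refine Real.rpow_nonneg ?_ _
  nlinarith [hs.1, hs.2]

theorem nuDens_beta {n : ℕ} (hn : 1 ≤ n) (t : ℝ) (h1 : t ≠ -1) (h2 : t ≠ 1) :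
    nuDens n t = 2⁻¹ *
      ProbabilityTheory.betaPDFReal ((n : ℝ) / 2) ((n : ℝ) / 2) (2⁻¹ * (t + 1)) := by
  unfold nuDens ProbabilityTheory.betaPDFReal
  by_cases ht : t ∈ Set.Icc (-1 : ℝ) 1
  · have hlt1 : -1 < t := lt_of_le_of_ne ht.1 h1.symm
    have hlt2 : t < 1 := lt_of_le_of_ne ht.2 h2
    rw [Set.indicator_of_mem ht, if_pos ⟨by linarith, by linarith⟩, mul_assoc (1 / _),
      ← Real.mul_rpow (by linarith) (by linarith)]
    have e1 : 2⁻¹ * (t + 1) * (1 - 2⁻¹ * (t + 1)) = (1 - t ^ 2) * (2 : ℝ) ^ (-2 : ℝ) := by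
      rw [Real.rpow_neg (by norm_num)]; norm_num; ring
    have hp : 0 < 1 - t ^ 2 := by nlinarith
    rw [e1, Real.mul_rpow hp.le (by positivity), ← Real.rpow_mul (by norm_num)]
    have hn' : (1 : ℝ) ≤ n := by exact_mod_cast hn
    have hG := Real.Gamma_pos_of_pos (show 0 < (n : ℝ) / 2 by positivity)
    have hG2 := Real.Gamma_pos_of_pos (show 0 < (n : ℝ) / 2 + n / 2 by positivity)
    have hd := Real.Gamma_mul_Gamma_add_half ((n : ℝ) / 2)
    have e2 : (n : ℝ) / 2 + 1 / 2 = (n + 1) / 2 := by ring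
    have e3 : 2 * ((n : ℝ) / 2) = n / 2 + n / 2 := by ring
    rw [e2, e3] at hd
    have e4 : (2 : ℝ) ^ (-2 * ((n : ℝ) / 2 - 1)) = 2 * 2 ^ (1 - ((n : ℝ) / 2 + n / 2)) := by
      have h5 := Real.rpow_add (zero_lt_two' ℝ) 1 (1 - ((n : ℝ) / 2 + n / 2))
      rw [Real.rpow_one] at h5
      rw [← h5]
      congr 1; ring
    rw [e4, ProbabilityTheory.beta]
    have hpi : 0 < √Real.pi := Real.sqrt_pos.mpr Real.pi_pos
    generalize (n : ℝ) / 2 + n / 2 = r at *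
    field_simp
    linear_combination hd
  · rw [Set.indicator_of_notMem ht, if_neg, mul_zero, mul_zero]
    rintro ⟨ha, hb⟩
    exact ht ⟨by linarith, by linarith⟩

theorem nuDens_lintegral {n : ℕ} (hn : 1 ≤ n) : ∫⁻ t, ENNReal.ofReal (nuDens n t) = 1 := by
  have hn' : (1 : ℝ) ≤ n := by exact_mod_cast hn
  have h1 : (fun t => ENNReal.ofReal (nuDens n t)) =ᵐ[volume] fun t => ENNReal.ofReal 2⁻¹ *
      ProbabilityTheory.betaPDF ((n : ℝ) / 2) ((n : ℝ) / 2) (2⁻¹ * (t + 1)) := by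
    have ha : ∀ᵐ t : ℝ, t ≠ -1 := by simp [ae_iff]
    have hb : ∀ᵐ t : ℝ, t ≠ 1 := by simp [ae_iff]
    filter_upwards [ha, hb] with t h1 h2
    rw [nuDens_beta hn t h1 h2, ENNReal.ofReal_mul (by norm_num)]
    rfl
  have hm : Measurable (ProbabilityTheory.betaPDF ((n : ℝ) / 2) ((n : ℝ) / 2)) :=
    (ProbabilityTheory.measurable_betaPDFReal _ _).ennreal_ofReal
  rw [lintegral_congr_ae h1, lintegral_const_mul _ (by fun_prop),
    lintegral_add_right_eq_self (fun t : ℝ => ProbabilityTheory.betaPDF ((n : ℝ) / 2) ((n : ℝ) / 2)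
      (2⁻¹ * t)) 1,
    ← lintegral_map (g := fun t : ℝ => 2⁻¹ * t) hm (by fun_prop),
    Real.map_volume_mul_left (by norm_num), lintegral_smul_measure,
    ProbabilityTheory.lintegral_betaPDF_eq_one (by positivity) (by positivity)]
  rw [smul_eq_mul, mul_one, ← ENNReal.ofReal_mul (by norm_num)]
  norm_num

theorem nu_prob {n : ℕ} (hn : 1 ≤ n) : IsProbabilityMeasure (nuMeasure n) := by
  constructor
  rw [nuMeasure_eq, withDensity_apply _ MeasurableSet.univ, Measure.restrict_univ,
    nuDens_lintegral hn]

theorem nu_ae (n : ℕ) : ∀ᵐ t ∂(nuMeasure n), t ∈ Set.Icc (-1 : ℝ) 1 := by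
  rw [ae_iff, nuMeasure_eq, withDensity_apply _ (by measurability)]
  refine setLIntegral_eq_zero (by measurability) fun t ht => ?_
  simp only [nuDens]
  rw [Set.indicator_of_notMem (show t ∉ Set.Icc (-1 : ℝ) 1 from ht)]
  simp

theorem nuDens_integrable {n : ℕ} (hn : 1 ≤ n) : Integrable (nuDens n) := by
  refine ⟨(nuDens_meas n).aestronglyMeasurable, ?_⟩
  rw [hasFiniteIntegral_iff_ofReal (Filter.Eventually.of_forall (nuDens_nonneg hn)),
    nuDens_lintegral hn]
  exact ENNReal.one_lt_top

theorem nu_Lop {n : ℕ} (hn : 1 ≤ n) (p : Polynomial ℝ) :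
    ∫ t, (Lop n p).eval t ∂(nuMeasure n) = 0 := by
  have hn' : (1 : ℝ) ≤ n := by exact_mod_cast hn
  have hcp := nuConst_pos hn
  rw [nuMeasure_eq, integral_withDensity_eq_integral_toReal_smul
    (nuDens_meas n).ennreal_ofReal (Filter.Eventually.of_forall fun _ => ENNReal.ofReal_lt_top)]
  have hdint := nuDens_integrable hn
  unfold nuDens at hdint
  rw [integrable_const_mul_iff (isUnit_iff_ne_zero.mpr hcp.ne'),
    integrable_indicator_iff measurableSet_Icc] at hdint
  have hI : IntervalIntegrable (fun s : ℝ => (1 - s ^ 2) ^ ((n : ℝ) / 2 - 1)) volume (-1) 1 := by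
    rw [intervalIntegrable_iff_integrableOn_Icc_of_le (by norm_num)]; exact hdint
  have hftc := intervalIntegral.integral_eq_sub_of_hasDerivAt_of_le (a := -1) (b := 1)
    (by norm_num) (f := fun t : ℝ => (1 - t ^ 2) ^ ((n : ℝ) / 2) * p.derivative.eval t)
    (f' := fun t : ℝ => (1 - t ^ 2) ^ ((n : ℝ) / 2 - 1) * (Lop n p).eval t)
    (by
      refine Continuous.continuousOn (Continuous.mul ?_ p.derivative.continuous)
      exact Continuous.rpow_const (by fun_prop) fun x => Or.inr (by positivity))
    (by
      intro t ht
      have hp : 0 < 1 - t ^ 2 := by nlinarith [ht.1, ht.2]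
      have h1 : HasDerivAt (fun t : ℝ => 1 - t ^ 2) (-(2 * t)) t := by
        simpa using (hasDerivAt_pow 2 t).const_sub 1
      have h2 := (h1.rpow_const (p := (n : ℝ) / 2) (Or.inl hp.ne')).mul (p.derivative.hasDerivAt t)
      refine HasDerivAt.congr_deriv h2 ?_
      have h3 : (1 - t ^ 2) ^ ((n : ℝ) / 2) = (1 - t ^ 2) ^ ((n : ℝ) / 2 - 1) * (1 - t ^ 2) := by
        conv_rhs => rw [← Real.rpow_add_one hp.ne', sub_add_cancel]
      rw [h3, Lop_eval]
      ring)
    (hI.mul_continuousOn (Lop n p).continuous.continuousOn)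
  have h0 : (0 : ℝ) ^ ((n : ℝ) / 2) = 0 := Real.zero_rpow (by positivity)
  norm_num [h0] at hftc
  rw [intervalIntegral.integral_of_le (by norm_num), ← integral_Icc_eq_integral_Ioc,
    ← integral_indicator measurableSet_Icc] at hftc
  rw [← mul_zero (Real.Gamma (((n : ℝ) + 1) / 2) / (Real.sqrt Real.pi * Real.Gamma ((n : ℝ) / 2))),
    ← hftc, ← integral_const_mul]
  refine integral_congr_ae (Filter.Eventually.of_forall fun t => ?_)
  simp only [ENNReal.toReal_ofReal (nuDens_nonneg hn t), smul_eq_mul]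
  unfold nuDens
  by_cases ht : t ∈ Set.Icc (-1 : ℝ) 1
  · rw [Set.indicator_of_mem ht, Set.indicator_of_mem ht]; ring
  · rw [Set.indicator_of_notMem ht, Set.indicator_of_notMem ht]; ring

theorem poly_integrable {μ : Measure ℝ} [IsFiniteMeasure μ]
    (hμ : ∀ᵐ t ∂μ, t ∈ Set.Icc (-1 : ℝ) 1) {f : ℝ → ℝ} (hf : Continuous f) : Integrable f μ := by
  obtain ⟨M, hM⟩ := (isCompact_Icc (a := (-1 : ℝ)) (b := 1)).exists_bound_of_continuousOn
    hf.continuousOn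
  exact Integrable.of_bound hf.aestronglyMeasurable M (hμ.mono fun t ht => hM t ht)

theorem const_term {n : ℕ} (hn : 1 ≤ n) {μ : Measure ℝ} [IsProbabilityMeasure μ]
    (hμ : ∀ᵐ t ∂μ, t ∈ Set.Icc (-1 : ℝ) 1)
    (hL : ∀ p : Polynomial ℝ, ∫ t, (Lop n p).eval t ∂μ = 0) (d : ℕ) (P : ℕ → Polynomial ℝ)
    (hP : ∀ k, Lop n (P k) = - (lam n k) • P k) (c : ℝ) (hc : P 0 = Polynomial.C c) :
    ∫ t, (∑ k ∈ Finset.range (d + 1), P k).eval t ∂μ = c := by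
  simp only [Polynomial.eval_finsetSum]
  rw [integral_finsetSum _ fun k _ => poly_integrable hμ (P k).continuous,
    Finset.sum_range_succ', hc]
  simp only [Polynomial.eval_C, integral_const, probReal_univ, smul_eq_mul, one_mul]
  rw [Finset.sum_eq_zero, zero_add]
  intro k _
  have h := hL (P (k + 1))
  rw [hP] at h
  simp only [Polynomial.eval_smul, smul_eq_mul] at h
  rw [integral_const_mul] at h
  exact (mul_eq_zero.mp h).resolve_left (neg_ne_zero.mpr (lam_pos hn (by omega)).ne')

theorem meas_eq {n : ℕ} (hn : 1 ≤ n) {μ ν : Measure ℝ} [IsProbabilityMeasure μ]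
    [IsProbabilityMeasure ν]
    (hμ : ∀ᵐ t ∂μ, t ∈ Set.Icc (-1 : ℝ) 1) (hν : ∀ᵐ t ∂ν, t ∈ Set.Icc (-1 : ℝ) 1)
    (hLμ : ∀ p : Polynomial ℝ, ∫ t, (Lop n p).eval t ∂μ = 0)
    (hLν : ∀ p : Polynomial ℝ, ∫ t, (Lop n p).eval t ∂ν = 0) : μ = ν := by
  have hpoly : ∀ q : Polynomial ℝ, ∫ t, q.eval t ∂μ = ∫ t, q.eval t ∂ν := by
    intro q
    obtain ⟨P, hP, ⟨c, hc⟩, hq⟩ := exists_decomp hn q.natDegree q le_rfl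
    rw [hq, const_term hn hμ hLμ _ P hP c hc, const_term hn hν hLν _ P hP c hc]
  refine ext_of_forall_integral_eq_of_IsFiniteMeasure fun f => ?_
  refine eq_of_forall_dist_le fun ε hε => ?_
  obtain ⟨q, hq⟩ := exists_polynomial_near_of_continuousOn (-1) 1 f f.continuous.continuousOn
    (ε / 2) (by positivity)
  have hb : ∀ (m : Measure ℝ) [IsProbabilityMeasure m], (∀ᵐ t ∂m, t ∈ Set.Icc (-1 : ℝ) 1) →
      |∫ t, q.eval t ∂m - ∫ t, f t ∂m| ≤ ε / 2 := by
    intro m _ hm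
    rw [← integral_sub (poly_integrable hm q.continuous) (poly_integrable hm f.continuous)]
    have := norm_integral_le_of_norm_le_const (μ := m) (f := fun t => q.eval t - f t) (C := ε / 2)
      (hm.mono fun t ht => (hq t ht).le)
    simpa using this
  have h1 := abs_le.mp (hb μ hμ)
  have h2 := abs_le.mp (hb ν hν)
  rw [hpoly q] at h1
  rw [Real.dist_eq, abs_le]
  constructor <;> linarith [h1.1, h1.2, h2.1, h2.2]

theorem marginal {n : ℕ} (hn : 1 ≤ n) (i : Fin (n + 1)) :
    MeasurePreserving (fun x : Sph n => (x : EuclideanSpace ℝ (Fin (n + 1))) i)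
      (sphereHaar n) (nuMeasure n) := by
  refine ⟨(coord_cont i).measurable, ?_⟩
  have := nu_prob hn
  have : IsProbabilityMeasure ((sphereHaar n).map
      fun x : Sph n => (x : EuclideanSpace ℝ (Fin (n + 1))) i) :=
    Measure.isProbabilityMeasure_map (coord_cont i).aemeasurable
  refine meas_eq hn ?_ (nu_ae n) (fun p => ?_) (nu_Lop hn)
  · refine (ae_map_iff (coord_cont i).aemeasurable (p := fun t : ℝ => t ∈ Set.Icc (-1 : ℝ) 1)
      measurableSet_Icc).mpr ?_
    exact Filter.Eventually.of_forall fun x => sph_mem x i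
  · rw [integral_map (coord_cont i).aemeasurable (Lop n p).continuous.aestronglyMeasurable]
    exact sph_Lop i p

/-- half logarithmic derivative -/
noncomputable def hA (Q : Polynomial ℝ) (y : ℝ) : ℝ := Q.derivative.eval y / (2 * Q.eval y)

noncomputable def hB (Q : Polynomial ℝ) (y : ℝ) : ℝ :=
  Q.derivative.derivative.eval y / (2 * Q.eval y) - Q.derivative.eval y ^ 2 / (2 * Q.eval y ^ 2)

theorem hlog_deriv {Q : Polynomial ℝ} {y : ℝ} (h : 0 < Q.eval y) :
    HasDerivAt (fun y => 1 / 2 * Real.log (Q.eval y)) (hA Q y) y := by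
  refine (((Q.hasDerivAt y).log h.ne').const_mul (1 / 2)).congr_deriv ?_
  unfold hA
  field_simp

theorem hA_deriv {Q : Polynomial ℝ} {y : ℝ} (h : 0 < Q.eval y) :
    HasDerivAt (hA Q) (hB Q y) y := by
  have h2 : (2 * Q.eval y) ≠ 0 := by positivity
  refine ((Q.derivative.hasDerivAt y).div ((Q.hasDerivAt y).const_mul 2) h2).congr_deriv ?_
  unfold hB
  field_simp

theorem hLop {n : ℕ} {Q : Polynomial ℝ} {y : ℝ} (h : 0 < Q.eval y) :
    (Lop n Q).eval y / (2 * Q.eval y)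
      = (1 - y ^ 2) * (hB Q y + 2 * hA Q y ^ 2) - n * y * hA Q y := by
  rw [Lop_eval]
  unfold hA hB
  field_simp
  ring

theorem sum_algebra {n : ℕ} (x a b : Fin (n + 1) → ℝ) (hx : ∑ i, x i ^ 2 = 1) :
    ∑ i, ∑ j ∈ Finset.univ.erase i, ((x i * a j - x j * a i) ^ 2 + x i ^ 2 * b j + x j ^ 2 * b i
      - x j * a j - x i * a i)
    = 2 * (∑ i, a i ^ 2 - (∑ i, a i * x i) ^ 2)
      + 2 * ∑ i, ((1 - x i ^ 2) * b i - n * x i * a i) := by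
  have h1 : ∀ i, ∑ j ∈ Finset.univ.erase i, ((x i * a j - x j * a i) ^ 2 + x i ^ 2 * b j
      + x j ^ 2 * b i - x j * a j - x i * a i)
      = x i ^ 2 * (∑ j, a j ^ 2) - 2 * (a i * x i) * (∑ j, a j * x j) + a i ^ 2
        + x i ^ 2 * (∑ j, b j) + b i - (∑ j, a j * x j) - (n + 1) * (a i * x i)
        - 2 * (x i ^ 2 * b i) + 2 * (a i * x i) := by
    intro i
    have e : ∑ j, ((x i * a j - x j * a i) ^ 2 + x i ^ 2 * b j
      + x j ^ 2 * b i - x j * a j - x i * a i)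
      = x i ^ 2 * (∑ j, a j ^ 2) - 2 * (a i * x i) * (∑ j, a j * x j) + a i ^ 2 * ∑ j, x j ^ 2
        + x i ^ 2 * (∑ j, b j) + b i * ∑ j, x j ^ 2 - (∑ j, a j * x j)
        - ∑ j : Fin (n + 1), (a i * x i) := by
      simp only [Finset.mul_sum, ← Finset.sum_sub_distrib, ← Finset.sum_add_distrib]
      exact Finset.sum_congr rfl fun j _ => by ring
    rw [← Finset.add_sum_erase _ _ (Finset.mem_univ i)] at e
    rw [eq_sub_of_add_eq' e, hx]
    simp only [Finset.sum_const, Finset.card_univ, Fintype.card_fin, nsmul_eq_mul]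
    push_cast
    ring
  rw [Finset.sum_congr rfl fun i _ => h1 i]
  have h2 : ∑ i, ((1 - x i ^ 2) * b i - n * x i * a i)
      = ∑ i, b i - ∑ i, x i ^ 2 * b i - n * ∑ i, a i * x i := by
    simp only [Finset.mul_sum, ← Finset.sum_sub_distrib]
    exact Finset.sum_congr rfl fun j _ => by ring
  rw [h2]
  simp only [Finset.sum_sub_distrib, Finset.sum_add_distrib, ← Finset.mul_sum, ← Finset.sum_mul,
    hx, Finset.sum_const, Finset.card_univ, Fintype.card_fin, nsmul_eq_mul]
  push_cast
  ring

/-- weight -/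
noncomputable def wgt {n : ℕ} (Q : Fin (n + 1) → Polynomial ℝ) (x : Sph n) : ℝ :=
  Real.exp (∑ k, 1 / 2 * Real.log ((Q k).eval ((x : EuclideanSpace ℝ (Fin (n + 1))) k)))

theorem wgt_cont {n : ℕ} {Q : Fin (n + 1) → Polynomial ℝ}
    (hQ : ∀ k, ∀ y ∈ Set.Icc (-1 : ℝ) 1, 0 < (Q k).eval y)  : Continuous (wgt Q) := by
  unfold wgt
  refine Real.continuous_exp.comp (continuous_finsetSum _ fun k _ => ?_)
  exact continuous_const.mul (Continuous.log ((Q k).continuous.comp (coord_cont k))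
    fun x => (hQ k _ (sph_mem x k)).ne')

theorem hA_cont {n : ℕ} {Q : Fin (n + 1) → Polynomial ℝ}
    (hQ : ∀ k, ∀ y ∈ Set.Icc (-1 : ℝ) 1, 0 < (Q k).eval y) (k : Fin (n + 1)) :
    Continuous fun x : Sph n => hA (Q k) ((x : EuclideanSpace ℝ (Fin (n + 1))) k) := by
  unfold hA
  exact Continuous.div ((Q k).derivative.continuous.comp (coord_cont k))
    (continuous_const.mul ((Q k).continuous.comp (coord_cont k)))
    fun x => by have := hQ k _ (sph_mem x k); positivity

theorem hB_cont {n : ℕ} {Q : Fin (n + 1) → Polynomial ℝ}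
    (hQ : ∀ k, ∀ y ∈ Set.Icc (-1 : ℝ) 1, 0 < (Q k).eval y) (k : Fin (n + 1)) :
    Continuous fun x : Sph n => hB (Q k) ((x : EuclideanSpace ℝ (Fin (n + 1))) k) := by
  unfold hB
  refine Continuous.sub (Continuous.div ((Q k).derivative.derivative.continuous.comp (coord_cont k))
    (continuous_const.mul ((Q k).continuous.comp (coord_cont k)))
    fun x => by have := hQ k _ (sph_mem x k); positivity)
    (Continuous.div (((Q k).derivative.continuous.comp (coord_cont k)).pow 2)
    (continuous_const.mul (((Q k).continuous.comp (coord_cont k)).pow 2))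
    fun x => by have := hQ k _ (sph_mem x k); positivity)

theorem wgt_rot {n : ℕ} {Q : Fin (n + 1) → Polynomial ℝ}
    (hQ : ∀ k, ∀ y ∈ Set.Icc (-1 : ℝ) 1, 0 < (Q k).eval y) (i j : Fin (n + 1)) (hij : i ≠ j) (x : Sph n) :
    HasDerivAt (fun θ => wgt Q (sphMap (rot i j hij θ) x))
      (wgt Q x * ((x : EuclideanSpace ℝ (Fin (n + 1))) i *
          hA (Q j) ((x : EuclideanSpace ℝ (Fin (n + 1))) j)
        - (x : EuclideanSpace ℝ (Fin (n + 1))) j *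
          hA (Q i) ((x : EuclideanSpace ℝ (Fin (n + 1))) i))) 0 := by
  have hk : ∀ k ∈ Finset.univ, HasDerivAt (fun θ => 1 / 2 * Real.log ((Q k).eval
      ((sphMap (rot i j hij θ) x : EuclideanSpace ℝ (Fin (n + 1))) k)))
      (if k = i then -(x : EuclideanSpace ℝ (Fin (n + 1))) j *
          hA (Q i) ((x : EuclideanSpace ℝ (Fin (n + 1))) i) else if k = j then
        (x : EuclideanSpace ℝ (Fin (n + 1))) i *
          hA (Q j) ((x : EuclideanSpace ℝ (Fin (n + 1))) j) else 0) 0 := by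
    intro k _
    have hpos : 0 < (Q k).eval ((sphMap (rot i j hij 0) x : EuclideanSpace ℝ (Fin (n + 1))) k) :=
      hQ k _ (sph_mem _ k)
    by_cases h1 : k = i
    · subst h1
      rw [if_pos rfl]
      have := (hlog_deriv hpos).comp (0 : ℝ) (rot_i k j hij x)
      rw [sph_zero] at this
      exact HasDerivAt.congr_deriv this (by ring)
    · by_cases h2 : k = j
      · subst h2
        rw [if_neg h1, if_pos rfl]
        have := (hlog_deriv hpos).comp (0 : ℝ) (rot_j i k hij x)
        rw [sph_zero] at this
        exact HasDerivAt.congr_deriv this (by ring)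
      · rw [if_neg h1, if_neg h2]
        simp only [rot_k i j hij x k h1 h2]
        exact hasDerivAt_const _ _
  have hs := (HasDerivAt.fun_sum hk).exp
  have hS := Fintype.sum_eq_add (f := fun k => if k = i then
      -(x : EuclideanSpace ℝ (Fin (n + 1))) j *
          hA (Q i) ((x : EuclideanSpace ℝ (Fin (n + 1))) i) else if k = j then
        (x : EuclideanSpace ℝ (Fin (n + 1))) i *
          hA (Q j) ((x : EuclideanSpace ℝ (Fin (n + 1))) j) else 0) i j hij (by
    rintro k ⟨h1, h2⟩
    simp [h1, h2])
  simp only [if_true, hij.symm, if_false] at hS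
  rw [sph_zero, hS] at hs
  refine HasDerivAt.congr_deriv hs ?_
  unfold wgt
  ring

theorem energy_nonneg {n : ℕ} {Q : Fin (n + 1) → Polynomial ℝ}
    (hQ : ∀ k, ∀ y ∈ Set.Icc (-1 : ℝ) 1, 0 < (Q k).eval y)  :
    0 ≤ ∫ x : Sph n, wgt Q x * ∑ k, (Lop n (Q k)).eval ((x : EuclideanSpace ℝ (Fin (n + 1))) k) /
      (2 * (Q k).eval ((x : EuclideanSpace ℝ (Fin (n + 1))) k)) ∂(sphereHaar n) := by
  have hco := coord_cont (n := n)
  have hW := wgt_cont hQ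
  have hAc := hA_cont hQ
  have hBc := hB_cont hQ
  set X : Sph n → Fin (n + 1) → ℝ := fun x k => (x : EuclideanSpace ℝ (Fin (n + 1))) k with hX
  set h' : Fin (n + 1) → Fin (n + 1) → Sph n → ℝ := fun i j x => wgt Q x *
    ((X x i * hA (Q j) (X x j) - X x j * hA (Q i) (X x i)) ^ 2 + X x i ^ 2 * hB (Q j) (X x j)
      + X x j ^ 2 * hB (Q i) (X x i) - X x j * hA (Q j) (X x j) - X x i * hA (Q i) (X x i)) with hh'
  have hcont : ∀ i j, Continuous (h' i j) := fun i j =>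
    hW.mul ((((((((hco i).mul (hAc j)).sub ((hco j).mul (hAc i))).pow 2).add
      (((hco i).pow 2).mul (hBc j))).add (((hco j).pow 2).mul (hBc i))).sub
      ((hco j).mul (hAc j))).sub ((hco i).mul (hAc i)))
  have hz : ∀ i, ∀ j ∈ Finset.univ.erase i, ∫ x, h' i j x ∂(sphereHaar n) = 0 := by
    intro i j hj
    have hij : i ≠ j := (Finset.ne_of_mem_erase hj).symm
    refine ibp i j hij (fun x => wgt Q x * (X x i * hA (Q j) (X x j) - X x j * hA (Q i) (X x i)))
      _ (hW.mul (((hco i).mul (hAc j)).sub ((hco j).mul (hAc i)))) (hcont i j) fun x => ?_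
    have hpos : ∀ k, 0 < (Q k).eval
      ((sphMap (rot i j hij 0) x : EuclideanSpace ℝ (Fin (n + 1))) k) :=
      fun k => hQ k _ (sph_mem _ k)
    have hi := (hA_deriv (hpos i)).comp (0 : ℝ) (rot_i i j hij x)
    have hj := (hA_deriv (hpos j)).comp (0 : ℝ) (rot_j i j hij x)
    have hs := (wgt_rot hQ i j hij x).mul
      (((rot_i i j hij x).mul hj).sub ((rot_j i j hij x).mul hi))
    refine HasDerivAt.congr_deriv hs ?_
    simp only [Pi.mul_apply, Pi.sub_apply, Function.comp_apply, sph_zero, hh', hX]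
    ring
  have hsum : ∫ x, ∑ i, ∑ j ∈ Finset.univ.erase i, h' i j x ∂(sphereHaar n) = 0 := by
    rw [integral_finsetSum _ fun i _ => integrable_finsetSum _ fun j _ => sph_integrable (hcont i j)]
    refine Finset.sum_eq_zero fun i _ => ?_
    rw [integral_finsetSum _ fun j _ => sph_integrable (hcont i j)]
    exact Finset.sum_eq_zero (hz i)
  have hhalf : ∫ x, 1 / 2 * ∑ i, ∑ j ∈ Finset.univ.erase i, h' i j x ∂(sphereHaar n) = 0 := by
    rw [integral_const_mul, hsum, mul_zero]
  rw [← hhalf]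
  refine integral_mono (sph_integrable ?_) (sph_integrable ?_) fun x => ?_
  · exact continuous_const.mul (continuous_finsetSum _ fun i _ => continuous_finsetSum _
      fun j _ => hcont i j)
  · refine hW.mul (continuous_finsetSum _ fun k _ => Continuous.div
      ((Lop n (Q k)).continuous.comp (hco k))
      (continuous_const.mul ((Q k).continuous.comp (hco k)))
      fun x => by have := hQ k _ (sph_mem x k); positivity)
  · simp only [hh', ← Finset.mul_sum]
    have hx := sph_sum x
    have h1 := sum_algebra (X x) (fun k => hA (Q k) (X x k)) (fun k => hB (Q k) (X x k)) hx
    have h2 := pointwise_ineq (X x) (fun k => hA (Q k) (X x k)) hx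
    rw [h1, Finset.sum_congr rfl fun k _ => hLop (hQ k _ (sph_mem x k))]
    have hw : 0 ≤ wgt Q x := (Real.exp_pos _).le
    rw [mul_left_comm]
    refine mul_le_mul_of_nonneg_left ?_ hw
    have h3 : ∑ k, ((1 - (X x k) ^ 2) * (hB (Q k) (X x k) + 2 * hA (Q k) (X x k) ^ 2)
        - n * X x k * hA (Q k) (X x k))
        = ∑ k, ((1 - (X x k) ^ 2) * hB (Q k) (X x k) - n * X x k * hA (Q k) (X x k))
          + 2 * ∑ k, (1 - (X x k) ^ 2) * hA (Q k) (X x k) ^ 2 := by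
      rw [Finset.mul_sum, ← Finset.sum_add_distrib]
      exact Finset.sum_congr rfl fun k _ => by ring
    refine le_trans ?_ h3.ge
    linarith

theorem wgt_eq {n : ℕ} {Q : Fin (n + 1) → Polynomial ℝ}
    (hQ : ∀ k, ∀ y ∈ Set.Icc (-1 : ℝ) 1, 0 < (Q k).eval y) (x : Sph n) :
    wgt Q x = ∏ k, Real.sqrt ((Q k).eval ((x : EuclideanSpace ℝ (Fin (n + 1))) k)) := by
  unfold wgt
  rw [Real.exp_sum]
  refine Finset.prod_congr rfl fun k _ => ?_
  have h := hQ k _ (sph_mem x k)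
  rw [Real.sqrt_eq_rpow, Real.rpow_def_of_pos h, mul_comm]

set_option maxHeartbeats 1000000 in
theorem flow_mono {n : ℕ} (d : Fin (n + 1) → ℕ) (P : Fin (n + 1) → ℕ → Polynomial ℝ)
    (hP : ∀ i k, Lop n (P i k) = - (lam n k) • P i k)
    (h0 : ∀ i, ∀ x ∈ Set.Icc (-1 : ℝ) 1, 0 < (flow n (d i) (P i) 0).eval x) :
    MonotoneOn (fun t => ∫ x, wgt (fun i => flow n (d i) (P i) t) x ∂(sphereHaar n))
      (Set.Ici 0) := by
  have hpos : ∀ t, 0 ≤ t → ∀ i, ∀ x ∈ Set.Icc (-1 : ℝ) 1, 0 < (flow n (d i) (P i) t).eval x :=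
    fun t ht i => flow_pos (hP i) (h0 i) t ht
  set X : Sph n → Fin (n + 1) → ℝ := fun x k => (x : EuclideanSpace ℝ (Fin (n + 1))) k with hX
  have hXc : ∀ k, Continuous fun x => X x k := coord_cont
  have hm : Continuous fun t : ℝ => max t 0 := by fun_prop
  have hGc : ∀ k, Continuous fun z : ℝ × Sph n =>
      (flow n (d k) (P k) (max z.1 0)).eval (X z.2 k) := fun k =>
    (flow_cont n (d k) (P k)).comp ((hm.comp continuous_fst).prodMk ((hXc k).comp continuous_snd))
  have hFc : Continuous fun z : ℝ × Sph n =>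
      wgt (fun i => flow n (d i) (P i) (max z.1 0)) z.2 := by
    unfold wgt
    refine Real.continuous_exp.comp (continuous_finsetSum _ fun k _ => continuous_const.mul ?_)
    exact Continuous.log (hGc k) fun z => (hpos _ (le_max_right _ _) k _ (sph_mem z.2 k)).ne'
  have hLc : ∀ k, Continuous fun z : ℝ × Sph n =>
      (Lop n (flow n (d k) (P k) (max z.1 0))).eval (X z.2 k) := by
    intro k
    have : Continuous fun z : ℝ × ℝ => (Lop n (flow n (d k) (P k) z.1)).eval z.2 := by
      simp only [Lop_eval, flow_deriv_eval, flow_deriv2_eval]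
      fun_prop
    exact this.comp ((hm.comp continuous_fst).prodMk ((hXc k).comp continuous_snd))
  set F' : ℝ → Sph n → ℝ := fun t x => wgt (fun i => flow n (d i) (P i) t) x *
    ∑ k, (Lop n (flow n (d k) (P k) t)).eval (X x k) /
      (2 * (flow n (d k) (P k) t).eval (X x k)) with hF'
  have hF'c : Continuous fun z : ℝ × Sph n => F' (max z.1 0) z.2 := by
    refine hFc.mul (continuous_finsetSum _ fun k _ => (hLc k).div (continuous_const.mul (hGc k)) ?_)
    intro z
    have := hpos _ (le_max_right z.1 0) k _ (sph_mem z.2 k)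
    exact (mul_pos two_pos this).ne'
  have hF't : ∀ t, 0 < t → Continuous (F' t) := by
    intro t ht
    have hpt : Continuous fun x : Sph n => (t, x) := by fun_prop
    have h1 := Continuous.comp (g := fun z : ℝ × Sph n => F' (max z.1 0) z.2) hF'c hpt
    have h2 : ((fun z : ℝ × Sph n => F' (max z.1 0) z.2) ∘ fun x : Sph n => (t, x)) = F' t := by
      ext x
      simp only [Function.comp_apply, max_eq_left ht.le]
    rwa [h2] at h1
  have hder : ∀ t, 0 < t → HasDerivAt
      (fun t => ∫ x, wgt (fun i => flow n (d i) (P i) t) x ∂(sphereHaar n))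
      (∫ x, F' t x ∂(sphereHaar n)) t := by
    intro t ht
    obtain ⟨M, hM⟩ := ((isCompact_Icc (a := t / 2) (b := 2 * t)).prod
      (isCompact_univ (X := Sph n))).exists_bound_of_continuousOn hF'c.continuousOn
    have hw : ∀ s, 0 < s → Continuous (wgt fun i => flow n (d i) (P i) s) := fun s hs =>
      wgt_cont (hpos s hs.le)
    refine (hasDerivAt_integral_of_dominated_loc_of_deriv_le (s := Set.Icc (t / 2) (2 * t))
      (bound := fun _ => M) (F' := F')
      (Icc_mem_nhds (by linarith) (by linarith)) ?_ (sph_integrable (hw t ht)) ?_ ?_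
      (integrable_const _) ?_).2
    · filter_upwards [lt_mem_nhds ht] with s hs
      exact (hw s hs).aestronglyMeasurable
    · exact (hF't t ht).aestronglyMeasurable
    · refine Filter.Eventually.of_forall fun x s hs => ?_
      have hs0 : 0 ≤ s := by linarith [hs.1]
      have := hM (s, x) ⟨hs, Set.mem_univ _⟩
      simpa only [max_eq_left hs0] using this
    · refine Filter.Eventually.of_forall fun x s hs => ?_
      have hs0 : 0 ≤ s := by linarith [hs.1]
      have h1 : ∀ k ∈ Finset.univ, HasDerivAt
          (fun s => 1 / 2 * Real.log ((flow n (d k) (P k) s).eval (X x k)))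
          ((Lop n (flow n (d k) (P k) s)).eval (X x k) /
            (2 * (flow n (d k) (P k) s).eval (X x k))) s := by
        intro k _
        have hp := hpos s hs0 k _ (sph_mem x k)
        refine (((flow_hasDerivAt (hP k) s (X x k)).log hp.ne').const_mul (1 / 2)).congr_deriv ?_
        have hp' : (flow n (d k) (P k) s).eval (X x k) ≠ 0 := hp.ne'
        field_simp
      exact (HasDerivAt.fun_sum h1).exp
  refine monotoneOn_of_deriv_nonneg (convex_Ici 0) ?_ ?_ ?_
  · have : Continuous fun t : ℝ => ∫ x in Set.univ,
        wgt (fun i => flow n (d i) (P i) (max t 0)) x ∂(sphereHaar n) :=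
      continuous_parametric_integral_of_continuous
        (f := fun t x => wgt (fun i => flow n (d i) (P i) (max t 0)) x) hFc isCompact_univ
    simp only [Measure.restrict_univ] at this
    refine this.continuousOn.congr fun t ht => ?_
    have ht' : (0 : ℝ) ≤ t := ht
    simp only [max_eq_left ht']
  · intro t ht
    rw [interior_Ici] at ht
    exact (hder t ht).differentiableAt.differentiableWithinAt
  · intro t ht
    rw [interior_Ici] at ht
    rw [(hder t ht).deriv]
    exact energy_nonneg (hpos t (le_of_lt ht))

theorem poly_case {n : ℕ} (hn : 1 ≤ n) (q : Fin (n + 1) → Polynomial ℝ)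
    (hq : ∀ i, ∀ y ∈ Set.Icc (-1 : ℝ) 1, 0 < (q i).eval y) :
    ∫ x, wgt q x ∂(sphereHaar n) ≤ ∏ i, Real.sqrt (∫ t, (q i).eval t ∂(nuMeasure n)) := by
  have := nu_prob hn
  choose P hP hc hsum using fun i => exists_decomp hn (q i).natDegree (q i) le_rfl
  choose c hc using hc
  set d : Fin (n + 1) → ℕ := fun i => (q i).natDegree with hd
  have hz : ∀ i, flow n (d i) (P i) 0 = q i := fun i => by rw [flow_zero, ← hsum i]
  have h0 : ∀ i, ∀ x ∈ Set.Icc (-1 : ℝ) 1, 0 < (flow n (d i) (P i) 0).eval x := by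
    intro i; rw [hz i]; exact hq i
  have hpos : ∀ t, 0 ≤ t → ∀ i, ∀ x ∈ Set.Icc (-1 : ℝ) 1, 0 < (flow n (d i) (P i) t).eval x :=
    fun t ht i => flow_pos (hP i) (h0 i) t ht
  have hmono := flow_mono d P hP h0
  have hci : ∀ i, ∫ t, (q i).eval t ∂(nuMeasure n) = c i := by
    intro i
    have := const_term hn (nu_ae n) (nu_Lop hn) (d i) (P i) (hP i) (c i) (hc i)
    rwa [← hsum i] at this
  simp only [hci]
  have hlam : ∀ k, 0 ≤ lam n k := by
    intro k
    rcases Nat.eq_zero_or_pos k with h | h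
    · simp [h, lam]
    · exact (lam_pos hn h).le
  have hlim : Filter.Tendsto
      (fun t => ∫ x, wgt (fun i => flow n (d i) (P i) t) x ∂(sphereHaar n)) Filter.atTop
      (nhds (∫ _x, ∏ i, Real.sqrt (c i) ∂(sphereHaar n))) := by
    refine tendsto_integral_filter_of_dominated_convergence
      (fun x : Sph n => ∏ i, Real.sqrt (∑ k ∈ Finset.range (d i + 1),
        |(P i k).eval ((x : EuclideanSpace ℝ (Fin (n + 1))) i)|)) ?_ ?_ ?_ ?_
    · filter_upwards [Filter.eventually_ge_atTop 0] with t ht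
      exact (wgt_cont (hpos t ht)).aestronglyMeasurable
    · filter_upwards [Filter.eventually_ge_atTop 0] with t ht
      refine Filter.Eventually.of_forall fun x => ?_
      rw [wgt_eq (hpos t ht), Real.norm_of_nonneg (Finset.prod_nonneg fun _ _ => Real.sqrt_nonneg _)]
      refine Finset.prod_le_prod (fun _ _ => Real.sqrt_nonneg _) fun i _ => Real.sqrt_le_sqrt ?_
      rw [flow_eval]
      refine Finset.sum_le_sum fun k _ => ?_
      refine (le_abs_self _).trans ?_
      rw [abs_mul, abs_of_pos (Real.exp_pos _)]
      refine mul_le_of_le_one_left (abs_nonneg _) (Real.exp_le_one_iff.2 ?_)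
      have := mul_nonneg (hlam k) ht
      linarith
    · refine sph_integrable (continuous_finsetProd _ fun i _ => Real.continuous_sqrt.comp
        (continuous_finsetSum _ fun k _ => ((P i k).continuous.comp (coord_cont i)).abs))
    · refine Filter.Eventually.of_forall fun x => ?_
      have h1 : Filter.Tendsto (fun t => ∏ i, Real.sqrt ((flow n (d i) (P i) t).eval
          ((x : EuclideanSpace ℝ (Fin (n + 1))) i))) Filter.atTop
          (nhds (∏ i, Real.sqrt (c i))) := by
        refine tendsto_finsetProd _ fun i _ => (Real.continuous_sqrt.tendsto _).comp ?_
        simp only [flow_eval]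
        simp only [Finset.sum_range_succ', hc i]
        rw [show c i = 0 + c i by ring]
        refine Filter.Tendsto.add ?_ ?_
        · rw [← Finset.sum_const_zero (s := Finset.range (d i)) (M := ℝ)]
          refine tendsto_finsetSum _ fun k _ => ?_
          rw [← zero_mul ((P i (k + 1)).eval ((x : EuclideanSpace ℝ (Fin (n + 1))) i))]
          refine Filter.Tendsto.mul_const _ (Real.tendsto_exp_atBot.comp ?_)
          exact Filter.tendsto_id.const_mul_atTop_of_neg (neg_neg_of_pos (lam_pos hn (Nat.le_add_left 1 k)))
        · simp [lam]
      refine h1.congr' ?_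
      filter_upwards [Filter.eventually_ge_atTop 0] with t ht
      rw [wgt_eq (hpos t ht)]
  rw [integral_const, probReal_univ, one_smul] at hlim
  refine ge_of_tendsto hlim ?_
  filter_upwards [Filter.eventually_ge_atTop 0] with t ht
  have := hmono (Set.mem_Ici.2 le_rfl) (Set.mem_Ici.2 ht) ht
  simpa only [hz] using this

theorem approx_poly {μ : Measure ℝ} [IsProbabilityMeasure μ]
    (hμ : ∀ᵐ t ∂μ, t ∈ Set.Icc (-1 : ℝ) 1) {g : ℝ → ℝ} (hg : MemLp g 2 μ) (hg0 : ∀ t, 0 ≤ g t)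
    {ε : ℝ} (hε : 0 < ε) : ∃ p : Polynomial ℝ, (∀ y ∈ Set.Icc (-1 : ℝ) 1, 0 < p.eval y) ∧
      eLpNorm ((fun t => p.eval t) - g) 2 μ ≤ ENNReal.ofReal ε := by
  obtain ⟨h, hh, -⟩ := hg.exists_boundedContinuous_eLpNorm_sub_le (p := 2) (by norm_num)
    (ε := ENNReal.ofReal (ε / 2)) (by simpa using hε)
  obtain ⟨p, hp⟩ := exists_polynomial_near_of_continuousOn (-1) 1 (fun t => |h t| + 2 * (ε / 6))
    (by have := h.continuous; fun_prop) (ε / 6) (by positivity)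
  refine ⟨p, fun y hy => ?_, ?_⟩
  · have h1 := abs_lt.1 (hp y hy)
    have h2 := abs_nonneg (h y)
    linarith [h1.1]
  · have e : ((fun t => p.eval t) - g) = (fun t => p.eval t - |h t|) + fun t => |h t| - g t := by
      ext t; simp
    have hhc : Continuous h := h.continuous
    rw [e, show ε = ε / 2 + ε / 2 by ring, ENNReal.ofReal_add (by positivity) (by positivity)]
    refine (eLpNorm_add_le ?_ ?_ (by norm_num)).trans (add_le_add ?_ ?_)
    · have : Continuous fun t => p.eval t - |h t| := p.continuous.sub hhc.abs
      exact this.aestronglyMeasurable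
    · exact hhc.abs.aestronglyMeasurable.sub hg.aestronglyMeasurable
    · refine (eLpNorm_le_of_ae_bound (C := ε / 2) (hμ.mono fun t ht => ?_)).trans (by simp)
      have h1 := abs_lt.1 (hp t ht)
      rw [Real.norm_eq_abs, abs_le]
      constructor <;> linarith [h1.1, h1.2]
    · refine le_trans (eLpNorm_mono fun t => ?_) hh
      have := abs_abs_sub_abs_le_abs_sub (h t) (g t)
      rw [abs_of_nonneg (hg0 t)] at this
      rw [Real.norm_eq_abs, Pi.sub_apply, Real.norm_eq_abs, abs_sub_comm (g t)]
      exact this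

theorem approx_seq {μ : Measure ℝ} [IsProbabilityMeasure μ]
    (hμ : ∀ᵐ t ∂μ, t ∈ Set.Icc (-1 : ℝ) 1) {g : ℝ → ℝ} (hg : MemLp g 2 μ) (hg0 : ∀ t, 0 ≤ g t) :
    ∃ p : ℕ → Polynomial ℝ, (∀ m, ∀ y ∈ Set.Icc (-1 : ℝ) 1, 0 < (p m).eval y) ∧
      Filter.Tendsto (fun m => eLpNorm ((fun t => (p m).eval t) - g) 2 μ) Filter.atTop (nhds 0) ∧
      ∀ᵐ t ∂μ, Filter.Tendsto (fun m => (p m).eval t) Filter.atTop (nhds (g t)) := by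
  choose p hp1 hp2 using fun m : ℕ => approx_poly hμ hg hg0 (ε := 1 / ((m : ℝ) + 1))
    Nat.one_div_pos_of_nat
  have ht : Filter.Tendsto (fun m => eLpNorm ((fun t => (p m).eval t) - g) 2 μ)
      Filter.atTop (nhds 0) := by
    refine tendsto_of_tendsto_of_tendsto_of_le_of_le tendsto_const_nhds ?_ (fun _ => zero_le) hp2
    have := ENNReal.tendsto_ofReal (tendsto_one_div_add_atTop_nhds_zero_nat (𝕜 := ℝ))
    simpa using this
  have hm := tendstoInMeasure_of_tendsto_eLpNorm (p := 2) (f := fun m t => (p m).eval t)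
    (by norm_num)
    (fun m => (p m).continuous.aestronglyMeasurable) hg.aestronglyMeasurable ht
  obtain ⟨ns, hns, hae⟩ := hm.exists_seq_tendsto_ae
  exact ⟨fun m => p (ns m), fun m => hp1 _, ht.comp hns.tendsto_atTop, hae⟩

theorem poly_case' {n : ℕ} (hn : 1 ≤ n) (p : Fin (n + 1) → Polynomial ℝ)
    (hp : ∀ i, ∀ y ∈ Set.Icc (-1 : ℝ) 1, 0 < (p i).eval y) :
    ∫⁻ x : Sph n, ∏ i, ENNReal.ofReal ((p i).eval ((x : EuclideanSpace ℝ (Fin (n + 1))) i))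
      ∂(sphereHaar n) ≤ ∏ i, eLpNorm (fun t => (p i).eval t) 2 (nuMeasure n) := by
  have := nu_prob hn
  have hq : ∀ i, ∀ y ∈ Set.Icc (-1 : ℝ) 1, 0 < (p i ^ 2).eval y := fun i y hy => by
    rw [Polynomial.eval_pow]; exact pow_pos (hp i y hy) 2
  have h := poly_case hn (fun i => p i ^ 2) hq
  have hw : ∀ x : Sph n, wgt (fun i => p i ^ 2) x
      = ∏ i, (p i).eval ((x : EuclideanSpace ℝ (Fin (n + 1))) i) := by
    intro x
    rw [wgt_eq hq]
    refine Finset.prod_congr rfl fun i _ => ?_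
    rw [Polynomial.eval_pow, Real.sqrt_sq (hp i _ (sph_mem x i)).le]
  have hc : Continuous fun x : Sph n =>
      ∏ i, (p i).eval ((x : EuclideanSpace ℝ (Fin (n + 1))) i) :=
    continuous_finsetProd _ fun i _ => (p i).continuous.comp (coord_cont i)
  have e1 : ∫⁻ x : Sph n, ∏ i, ENNReal.ofReal ((p i).eval ((x : EuclideanSpace ℝ (Fin (n + 1))) i))
      ∂(sphereHaar n) = ENNReal.ofReal (∫ x, wgt (fun i => p i ^ 2) x ∂(sphereHaar n)) := by
    simp only [hw]
    rw [ofReal_integral_eq_lintegral_ofReal (sph_integrable hc)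
      (Filter.Eventually.of_forall fun x =>
        Finset.prod_nonneg fun i _ => (hp i _ (sph_mem x i)).le)]
    refine lintegral_congr fun x => ?_
    rw [ENNReal.ofReal_prod_of_nonneg fun i _ => (hp i _ (sph_mem x i)).le]
  rw [e1]
  refine (ENNReal.ofReal_le_ofReal h).trans ?_
  rw [ENNReal.ofReal_prod_of_nonneg fun i _ => Real.sqrt_nonneg _]
  refine (Finset.prod_congr rfl fun i _ => ?_).le
  have hM : MemLp (fun t => (p i).eval t) 2 (nuMeasure n) := by
    rw [memLp_two_iff_integrable_sq (p i).continuous.aestronglyMeasurable]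
    exact poly_integrable (nu_ae n) ((p i).continuous.pow 2)
  rw [hM.eLpNorm_eq_integral_rpow_norm (by norm_num) (by norm_num), Real.sqrt_eq_rpow]
  simp

theorem main_memLp {n : ℕ} (hn : 1 ≤ n) (g : Fin (n + 1) → ℝ → ℝ) (hg0 : ∀ i t, 0 ≤ g i t)
    (hg : ∀ i, MemLp (g i) 2 (nuMeasure n)) :
    ∫⁻ x : Sph n, ∏ i, ENNReal.ofReal (g i ((x : EuclideanSpace ℝ (Fin (n + 1))) i))
      ∂(sphereHaar n) ≤ ∏ i, eLpNorm (g i) 2 (nuMeasure n) := by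
  have := nu_prob hn
  choose p hp1 hp2 hp3 using fun i => approx_seq (nu_ae n) (hg i) (hg0 i)
  have hae : ∀ᵐ x : Sph n ∂(sphereHaar n), ∀ i, Filter.Tendsto
      (fun m => (p i m).eval ((x : EuclideanSpace ℝ (Fin (n + 1))) i)) Filter.atTop
      (nhds (g i ((x : EuclideanSpace ℝ (Fin (n + 1))) i))) :=
    ae_all_iff.2 fun i => (marginal hn i).quasiMeasurePreserving.ae (hp3 i)
  set F : ℕ → Sph n → ℝ≥0∞ := fun m x =>
    ∏ i, ENNReal.ofReal ((p i m).eval ((x : EuclideanSpace ℝ (Fin (n + 1))) i)) with hF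
  have hFm : ∀ m, Measurable (F m) := fun m => Finset.measurable_fun_prod _ fun i _ =>
    ((p i m).continuous.comp (coord_cont i)).measurable.ennreal_ofReal
  have h1 : ∫⁻ x : Sph n, ∏ i, ENNReal.ofReal (g i ((x : EuclideanSpace ℝ (Fin (n + 1))) i))
      ∂(sphereHaar n) = ∫⁻ x, Filter.liminf (fun m => F m x) Filter.atTop ∂(sphereHaar n) := by
    refine lintegral_congr_ae (hae.mono fun x hx => ?_)
    refine (Filter.Tendsto.liminf_eq ?_).symm
    exact ENNReal.tendsto_finsetProd_of_ne_top _ (fun i _ => ENNReal.tendsto_ofReal (hx i))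
      fun i _ => ENNReal.ofReal_ne_top
  rw [h1]
  refine (lintegral_liminf_le hFm).trans ?_
  have hlim : Filter.Tendsto (fun m => ∏ i, (eLpNorm ((fun t => (p i m).eval t) - g i) 2 (nuMeasure n)
      + eLpNorm (g i) 2 (nuMeasure n))) Filter.atTop
      (nhds (∏ i, eLpNorm (g i) 2 (nuMeasure n))) := by
    refine ENNReal.tendsto_finsetProd_of_ne_top _ (fun i _ => ?_) fun i _ => (hg i).eLpNorm_ne_top
    simpa using (hp2 i).add_const (eLpNorm (g i) 2 (nuMeasure n))
  rw [← hlim.liminf_eq]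
  refine Filter.liminf_le_liminf (Filter.Eventually.of_forall fun m => ?_)
  refine (poly_case' hn (fun i => p i m) fun i => hp1 i m).trans
    (Finset.prod_le_prod' fun i _ => ?_)
  have e : (fun t => (p i m).eval t) = ((fun t => (p i m).eval t) - g i) + g i := by simp
  conv_lhs => rw [e]
  exact eLpNorm_add_le ((p i m).continuous.aestronglyMeasurable.sub (hg i).aestronglyMeasurable)
    (hg i).aestronglyMeasurable (by norm_num)

theorem final_ineq (n : ℕ) (hn : 1 ≤ n)
    (f : Fin (n + 1) → ℝ → ℝ) (hmeas : ∀ i, Measurable (f i)) :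
    ∫⁻ x : sphere (0 : EuclideanSpace ℝ (Fin (n + 1))) 1,
        ENNReal.ofReal
          (Real.exp (∑ i, f i ((x : EuclideanSpace ℝ (Fin (n + 1))) i))) ∂(sphereHaar n) ≤
      ∏ i, (∫⁻ t in Set.Icc (-1 : ℝ) 1,
          ENNReal.ofReal (Real.exp (2 * f i t)) ∂(nuMeasure n)) ^ ((1 : ℝ) / 2) := by
  have := nu_prob hn
  rw [Measure.restrict_eq_self_of_ae_mem (nu_ae n)]
  set g : Fin (n + 1) → ℝ → ℝ := fun i t => Real.exp (f i t) with hg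
  have hgm : ∀ i, Measurable (g i) := fun i => Real.measurable_exp.comp (hmeas i)
  have hL : ∀ i, (∫⁻ t, ENNReal.ofReal (Real.exp (2 * f i t)) ∂(nuMeasure n)) ^ ((1 : ℝ) / 2)
      = eLpNorm (g i) 2 (nuMeasure n) := by
    intro i
    rw [eLpNorm_eq_lintegral_rpow_enorm_toReal (by norm_num) (by norm_num)]
    simp only [ENNReal.toReal_ofNat]
    congr 1
    refine lintegral_congr fun t => ?_
    rw [Real.enorm_of_nonneg (Real.exp_pos _).le,
      ENNReal.ofReal_rpow_of_nonneg (Real.exp_pos _).le (by norm_num), ← Real.exp_mul, mul_comm]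
  simp only [hL]
  have hX : ∀ x : Sph n, ENNReal.ofReal
          (Real.exp (∑ i, f i ((x : EuclideanSpace ℝ (Fin (n + 1))) i)))
      = ∏ i, ENNReal.ofReal (g i ((x : EuclideanSpace ℝ (Fin (n + 1))) i)) := by
    intro x
    rw [Real.exp_sum, ENNReal.ofReal_prod_of_nonneg fun i _ => (Real.exp_pos _).le]
  simp only [hX]
  by_cases hfin : ∀ i, eLpNorm (g i) 2 (nuMeasure n) ≠ ⊤
  · exact main_memLp hn g (fun i t => (Real.exp_pos _).le) fun i =>
      ⟨(hgm i).aestronglyMeasurable, (hfin i).lt_top⟩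
  · push Not at hfin
    obtain ⟨i, hi⟩ := hfin
    have hne : ∀ j, eLpNorm (g j) 2 (nuMeasure n) ≠ 0 := by
      intro j h0
      rw [eLpNorm_eq_zero_iff (hgm j).aestronglyMeasurable (by norm_num)] at h0
      obtain ⟨t, ht⟩ := h0.exists
      exact (Real.exp_pos _).ne' ht
    have htop : ∏ i, eLpNorm (g i) 2 (nuMeasure n) = ⊤ := by
      rw [← Finset.mul_prod_erase _ _ (Finset.mem_univ i), hi]
      exact ENNReal.top_mul (Finset.prod_ne_zero_iff.2 fun j _ => hne j)
    rw [htop]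
    exact le_top

/-- **Brascamp–Lieb inequality on the sphere, exponential form**: for measurable
functions `f_i : [-1,1] → ℝ` bounded from below and `f(x) = ∑ f_i(x_i)`,
`∫_{S^n} e^f dσ_n ≤ ∏_i (∫_{[-1,1]} e^{2 f_i} dν_n)^{1/2}`. -/
theorem brascamp_lieb_sphere_exp (n : ℕ) (hn : 1 ≤ n)
    (f : Fin (n + 1) → ℝ → ℝ) (hmeas : ∀ i, Measurable (f i))
    (hbdd : ∀ i, ∃ C : ℝ, ∀ t ∈ Set.Icc (-1 : ℝ) 1, C ≤ f i t) :
    ∫⁻ x : sphere (0 : EuclideanSpace ℝ (Fin (n + 1))) 1,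
        ENNReal.ofReal
          (Real.exp (∑ i, f i ((x : EuclideanSpace ℝ (Fin (n + 1))) i))) ∂(sphereHaar n) ≤
      ∏ i, (∫⁻ t in Set.Icc (-1 : ℝ) 1,
          ENNReal.ofReal (Real.exp (2 * f i t)) ∂(nuMeasure n)) ^ ((1 : ℝ) / 2) := by
  exact final_ineq n hn f hmeas
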